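/- arXiv:1708.05573 — 2 statements merged into one kernel-verified Lean document; each statement's English description precedes it below -/
import Mathlib

section
/- Let Z ∈ {0,1}^{n×K} be a cluster membership matrix with clustering matrix C = ZZ^T and largest cluster proportion π_max = (max_k n_k)/n. On a probability space, let S_1, …, S_T be random subsets of {1,…,n} and let Ĉ^{(1)}, …, Ĉ^{(T)} be random n×n matrices with entries in [0,1] such that Ĉ^{(ℓ)}_{ij} = 0 whenever i ∉ S_ℓ or j ∉ S_ℓ. For each ℓ let C^{(ℓ)} be the matrix with C^{(ℓ)}_{ij} = C_{ij} if i,j ∈ S_ℓ and 0 otherwise, and assume the random variables ‖Ĉ^{(ℓ)} − C^{(ℓ)}‖_F², ℓ = 1,…,T, all have the same distribution. Let N_{ij} = #{ℓ : i ∈ S_ℓ and j ∈ S_ℓ}, fix a real τ with 1 ≤ τ ≤ T, and define Ĉ_{ij} = 1_{\{N_{ij} ≥ τ\}} · (Σ_{ℓ : i,j ∈ S_ℓ} Ĉ^{(ℓ)}_{ij}) / N_{ij}. Then E[δ̃(Ĉ, C)] ≤ (T/(τ n²)) · E[‖Ĉ^{(1)} − C^{(1)}‖_F²] + π_max · max_{i,j}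 P(N_{ij} < τ). -/
open Matrix BigOperators MeasureTheory ProbabilityTheory

/-- A cluster membership matrix: entries in {0,1}, every row has exactly one entry equal to 1. -/
def IsClusterMembership {n K : ℕ} (Z : Matrix (Fin n) (Fin K) ℝ) : Prop :=
  (∀ i k, Z i k = 0 ∨ Z i k = 1) ∧ ∀ i, ∃! k, Z i k = 1

/-- The size of cluster k under Z. -/
noncomputable def clusterSize {n K : ℕ} (Z : Matrix (Fin n) (Fin K) ℝ) (k : Fin K) : ℕ :=
  (Finset.univ.filter fun i => Z i k = 1).card

/-- δ̃(C,C') = (1/n²) ‖C − C'‖_F². -/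
noncomputable def deltaTilde {n : ℕ} (C C' : Matrix (Fin n) (Fin n) ℝ) : ℝ :=
  (1 / ((n : ℝ))^2) * ∑ i, ∑ j, (C i j - C' i j)^2

/-- Squared Frobenius norm. -/
noncomputable def sqFrob {a b : ℕ} (A : Matrix (Fin a) (Fin b) ℝ) : ℝ :=
  ∑ i, ∑ j, (A i j)^2

/-- N_{ij} = #{ℓ : i ∈ S_ℓ and j ∈ S_ℓ}. -/
def Ncount {n T : ℕ} {Ω : Type*} (S : Fin T → Ω → Finset (Fin n)) (ω : Ω) (i j : Fin n) : ℕ :=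
  (Finset.univ.filter fun ℓ => i ∈ S ℓ ω ∧ j ∈ S ℓ ω).card

/-- The PACE estimator: Ĉ_{ij}(ω) = 1_{N_{ij} ≥ τ} · (Σ_{ℓ : i,j ∈ S_ℓ} Ĉ^{(ℓ)}_{ij}) / N_{ij}. -/
noncomputable def paceEst {n T : ℕ} {Ω : Type*} (S : Fin T → Ω → Finset (Fin n))
    (Chatl : Fin T → Ω → Matrix (Fin n) (Fin n) ℝ) (τ : ℝ) (ω : Ω) :
    Matrix (Fin n) (Fin n) ℝ :=
  Matrix.of fun i j =>
    if τ ≤ (Ncount S ω i j : ℝ) then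
      (∑ ℓ, if i ∈ S ℓ ω ∧ j ∈ S ℓ ω then Chatl ℓ ω i j else 0) / (Ncount S ω i j : ℝ)
    else 0

/-- C^{(ℓ)}: the matrix C with entries zeroed outside s × s. -/
def restrictMat {n : ℕ} (C : Matrix (Fin n) (Fin n) ℝ) (s : Finset (Fin n)) :
    Matrix (Fin n) (Fin n) ℝ :=
  Matrix.of fun i j => if i ∈ s ∧ j ∈ s then C i j else 0

/-!
Where `N i j ≥ τ`, the estimator averages `N i j` values, so by Cauchy–Schwarz its squared error is
at most `τ⁻¹` times the sum of the squared errors of the subsampled clusterings. Where `N i j < τ`,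
the estimator vanishes and the squared error is `C i j ^ 2`. Taking expectations entry by entry, the
second kind of error contributes at most `‖C‖_F² · max P(N i j < τ)`, and `‖C‖_F²` is the sum over
the points of the sizes of their clusters, hence at most `n · max_k n_k`.
-/

section Frobenius

variable {a b : ℕ}

theorem sqFrob_nonneg (A : Matrix (Fin a) (Fin b) ℝ) : 0 ≤ sqFrob A :=
  Finset.sum_nonneg fun _ _ => Finset.sum_nonneg fun _ _ => sq_nonneg _

theorem sqFrob_le_of_abs_le {A : Matrix (Fin a) (Fin b) ℝ} {r : ℝ} (hA : ∀ i j, |A i j| ≤ r) :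
    sqFrob A ≤ a * b * r ^ 2 :=
  calc sqFrob A ≤ ∑ _i : Fin a, ∑ _j : Fin b, r ^ 2 :=
        Finset.sum_le_sum fun i _ => Finset.sum_le_sum fun j _ =>
          sq_le_sq.2 ((hA i j).trans (le_abs_self r))
    _ = a * b * r ^ 2 := by simp [mul_assoc]

theorem integrable_sqFrob_of_abs_le {Ω : Type*} [MeasurableSpace Ω] {μ : Measure Ω}
    [IsFiniteMeasure μ] {A : Ω → Matrix (Fin a) (Fin b) ℝ} {r : ℝ}
    (hmeas : AEStronglyMeasurable (fun ω => sqFrob (A ω)) μ) (hA : ∀ ω i j, |A ω i j| ≤ r) :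
    Integrable (fun ω => sqFrob (A ω)) μ :=
  .of_bound hmeas (a * b * r ^ 2) <| .of_forall fun ω =>
    (Real.norm_of_nonneg (sqFrob_nonneg _)).trans_le (sqFrob_le_of_abs_le (hA ω))

theorem sum_sq_mul_le_sqFrob_mul (A : Matrix (Fin a) (Fin b) ℝ) {p : Fin a → Fin b → ℝ} {P : ℝ}
    (hp : ∀ i j, p i j ≤ P) : ∑ i, ∑ j, A i j ^ 2 * p i j ≤ sqFrob A * P := by
  simp only [sqFrob, Finset.sum_mul]
  gcongr with i _ j _
  exact hp i j

theorem deltaTilde_eq_sqFrob_sub {n : ℕ} (C C' : Matrix (Fin n) (Fin n) ℝ) :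
    deltaTilde C C' = 1 / (n : ℝ) ^ 2 * sqFrob (C - C') :=
  rfl

end Frobenius

namespace IsClusterMembership

variable {n K : ℕ} {Z : Matrix (Fin n) (Fin K) ℝ}

theorem exists_row_eq_single (hZ : IsClusterMembership Z) (i : Fin n) :
    ∃ k, Z i = Pi.single k 1 := by
  obtain ⟨k, hk, huniq⟩ := hZ.2 i
  refine ⟨k, funext fun l => ?_⟩
  obtain rfl | hl := eq_or_ne l k
  · simpa using hk
  · simpa [hl] using (hZ.1 i l).resolve_right fun h => hl (huniq l h)

theorem exists_mul_transpose_row_eq (hZ : IsClusterMembership Z) (i : Fin n) :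
    ∃ k, ∀ j, (Z * Zᵀ) i j = Z j k := by
  obtain ⟨k, hk⟩ := hZ.exists_row_eq_single i
  exact ⟨k, fun j => by simp [Matrix.mul_apply, hk, Pi.single_apply]⟩

theorem mul_transpose_apply_mem_Icc (hZ : IsClusterMembership Z) (i j : Fin n) :
    (Z * Zᵀ) i j ∈ Set.Icc (0 : ℝ) 1 := by
  obtain ⟨k, hk⟩ := hZ.exists_mul_transpose_row_eq i
  rcases hZ.1 j k with h | h <;> simp [hk, h]

theorem sum_sq_column_eq_clusterSize (hZ : IsClusterMembership Z) (k : Fin K) :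
    ∑ j, Z j k ^ 2 = clusterSize Z k := by
  rw [clusterSize, Finset.natCast_card_filter]
  refine Finset.sum_congr rfl fun j _ => ?_
  rcases hZ.1 j k with h | h <;> simp [h]

theorem sqFrob_mul_transpose_le (hZ : IsClusterMembership Z) :
    sqFrob (Z * Zᵀ) ≤ n * (Finset.univ.sup fun k => clusterSize Z k : ℕ) := by
  have hrow (i : Fin n) :
      ∑ j, (Z * Zᵀ) i j ^ 2 ≤ (Finset.univ.sup fun k => clusterSize Z k : ℕ) := by
    obtain ⟨k, hk⟩ := hZ.exists_mul_transpose_row_eq i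
    simp only [hk, hZ.sum_sq_column_eq_clusterSize]
    exact_mod_cast Finset.le_sup (f := fun k => clusterSize Z k) (Finset.mem_univ k)
  simpa [sqFrob] using Finset.sum_le_sum fun i (_ : i ∈ Finset.univ) => hrow i

end IsClusterMembership

theorem sq_average_sub_le {ι : Type*} (s : Finset ι) (x : ι → ℝ) (c : ℝ) {τ : ℝ} (hτ : 0 < τ)
    (hs : τ ≤ s.card) :
    ((∑ l ∈ s, x l) / s.card - c) ^ 2 ≤ τ⁻¹ * ∑ l ∈ s, (x l - c) ^ 2 := by
  have hcard : (s.card : ℝ) ≠ 0 := (hτ.trans_le hs).ne'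
  calc ((∑ l ∈ s, x l) / s.card - c) ^ 2
      = ((∑ l ∈ s, (x l - c)) / s.card) ^ 2 := by
        rw [Finset.sum_sub_distrib, Finset.sum_const, nsmul_eq_mul, sub_div,
          mul_div_cancel_left₀ c hcard]
    _ ≤ (∑ l ∈ s, (x l - c) ^ 2) / s.card := sum_div_card_sq_le_sum_sq_div_card
    _ ≤ (∑ l ∈ s, (x l - c) ^ 2) / τ := by gcongr
    _ = τ⁻¹ * ∑ l ∈ s, (x l - c) ^ 2 := div_eq_inv_mul _ _

section Pace

variable {n T : ℕ} {Ω : Type*} {S : Fin T → Ω → Finset (Fin n)}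
  {Chatl : Fin T → Ω → Matrix (Fin n) (Fin n) ℝ} {τ : ℝ}

theorem paceEst_apply_of_lt {ω : Ω} {i j : Fin n} (h : Ncount S ω i j < τ) :
    paceEst S Chatl τ ω i j = 0 :=
  if_neg h.not_ge

theorem sq_paceEst_sub_le_of_le {ω : Ω} {i j : Fin n} (hτ : 0 < τ) (h : τ ≤ Ncount S ω i j)
    (C : Matrix (Fin n) (Fin n) ℝ) :
    (paceEst S Chatl τ ω i j - C i j) ^ 2
      ≤ τ⁻¹ * ∑ ℓ, (Chatl ℓ ω - restrictMat C (S ℓ ω)) i j ^ 2 := by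
  set s : Finset (Fin T) := {ℓ | i ∈ S ℓ ω ∧ j ∈ S ℓ ω}
  have hest : paceEst S Chatl τ ω i j = (∑ ℓ ∈ s, Chatl ℓ ω i j) / s.card := by
    rw [Finset.sum_filter]
    exact if_pos h
  have herr : ∀ ℓ ∈ s, (Chatl ℓ ω i j - C i j) ^ 2
      = (Chatl ℓ ω - restrictMat C (S ℓ ω)) i j ^ 2 := fun ℓ hℓ => by
    simp [restrictMat, (Finset.mem_filter.1 hℓ).2]
  calc (paceEst S Chatl τ ω i j - C i j) ^ 2
      ≤ τ⁻¹ * ∑ ℓ ∈ s, (Chatl ℓ ω i j - C i j) ^ 2 := by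
        rw [hest]
        exact sq_average_sub_le s _ _ hτ h
    _ = τ⁻¹ * ∑ ℓ ∈ s, (Chatl ℓ ω - restrictMat C (S ℓ ω)) i j ^ 2 := by
        rw [Finset.sum_congr rfl herr]
    _ ≤ τ⁻¹ * ∑ ℓ, (Chatl ℓ ω - restrictMat C (S ℓ ω)) i j ^ 2 := by
        gcongr
        exact Finset.subset_univ s

theorem sq_paceEst_sub_le (hτ : 0 < τ) (C : Matrix (Fin n) (Fin n) ℝ) (ω : Ω) (i j : Fin n) :
    (paceEst S Chatl τ ω i j - C i j) ^ 2
      ≤ τ⁻¹ * ∑ ℓ, (Chatl ℓ ω - restrictMat C (S ℓ ω)) i j ^ 2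
        + {ω' | (Ncount S ω' i j : ℝ) < τ}.indicator (fun _ => C i j ^ 2) ω := by
  rcases lt_or_ge (Ncount S ω i j : ℝ) τ with h | h
  · rw [paceEst_apply_of_lt h, Set.indicator_of_mem (by exact h), zero_sub, neg_sq]
    exact le_add_of_nonneg_left (by positivity)
  · rw [Set.indicator_of_notMem (by exact h.not_gt), add_zero]
    exact sq_paceEst_sub_le_of_le hτ h C

theorem deltaTilde_paceEst_le (hτ : 0 < τ) (C : Matrix (Fin n) (Fin n) ℝ) (ω : Ω) :
    deltaTilde (paceEst S Chatl τ ω) C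
      ≤ 1 / (n : ℝ) ^ 2 * (τ⁻¹ * ∑ ℓ, sqFrob (Chatl ℓ ω - restrictMat C (S ℓ ω))
        + ∑ i, ∑ j, {ω' | (Ncount S ω' i j : ℝ) < τ}.indicator (fun _ => C i j ^ 2) ω) := by
  have hswap : ∑ ℓ, sqFrob (Chatl ℓ ω - restrictMat C (S ℓ ω))
      = ∑ i, ∑ j, ∑ ℓ, (Chatl ℓ ω - restrictMat C (S ℓ ω)) i j ^ 2 :=
    Finset.sum_comm.trans <| Finset.sum_congr rfl fun _ _ => Finset.sum_comm
  rw [deltaTilde_eq_sqFrob_sub, hswap]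
  simp only [Finset.mul_sum, ← Finset.sum_add_distrib]
  simp only [← Finset.mul_sum]
  gcongr
  exact Finset.sum_le_sum fun i _ => Finset.sum_le_sum fun j _ => sq_paceEst_sub_le hτ C ω i j

variable [MeasurableSpace Ω]

theorem measurableSet_Ncount_lt (hSmeas : ∀ ℓ A, MeasurableSet {ω | S ℓ ω = A}) (τ : ℝ)
    (i j : Fin n) : MeasurableSet {ω | (Ncount S ω i j : ℝ) < τ} := by
  let _ : MeasurableSpace (Finset (Fin n)) := ⊤
  have hS : Measurable fun ω ℓ => S ℓ ω :=
    measurable_pi_lambda _ fun ℓ => measurable_to_countable' (hSmeas ℓ)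
  -- `N i j` factors through the family `S`, which takes finitely many values.
  have hfactor : MeasurableSet
      {A : Fin T → Finset (Fin n) | (Ncount (fun ℓ B => B ℓ) A i j : ℝ) < τ} :=
    (Set.toFinite _).measurableSet
  exact hS hfactor

theorem integrable_sqFrob_sub_restrictMat {μ : Measure Ω} [IsFiniteMeasure μ]
    {Chat : Ω → Matrix (Fin n) (Fin n) ℝ} {s : Ω → Finset (Fin n)} {C : Matrix (Fin n) (Fin n) ℝ}
    (hmeas : AEStronglyMeasurable (fun ω => sqFrob (Chat ω - restrictMat C (s ω))) μ)
    (hChat : ∀ ω i j, Chat ω i j ∈ Set.Icc (0 : ℝ) 1) (hC : ∀ i j, C i j ∈ Set.Icc (0 : ℝ) 1) :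
    Integrable (fun ω => sqFrob (Chat ω - restrictMat C (s ω))) μ := by
  refine integrable_sqFrob_of_abs_le hmeas (r := 1) fun ω i j => ?_
  have hres : restrictMat C (s ω) i j ∈ Set.Icc (0 : ℝ) 1 := by
    simp only [restrictMat, Matrix.of_apply]
    split_ifs
    exacts [hC i j, unitInterval.zero_mem]
  exact abs_sub_le_of_nonneg_of_le (hChat ω i j).1 (hChat ω i j).2 hres.1 hres.2

variable (μ : Measure Ω) [IsFiniteMeasure μ]

theorem integral_deltaTilde_paceEst_le (hSmeas : ∀ ℓ A, MeasurableSet {ω | S ℓ ω = A})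
    {C : Matrix (Fin n) (Fin n) ℝ}
    (hint : ∀ ℓ, Integrable (fun ω => sqFrob (Chatl ℓ ω - restrictMat C (S ℓ ω))) μ)
    (hτ : 0 < τ) :
    ∫ ω, deltaTilde (paceEst S Chatl τ ω) C ∂μ
      ≤ 1 / (n : ℝ) ^ 2 * (τ⁻¹ * ∑ ℓ, ∫ ω, sqFrob (Chatl ℓ ω - restrictMat C (S ℓ ω)) ∂μ
        + ∑ i, ∑ j, C i j ^ 2 * μ.real {ω | (Ncount S ω i j : ℝ) < τ}) := by
  have hN := measurableSet_Ncount_lt hSmeas τ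
  have hind (i j : Fin n) : Integrable
      ({ω | (Ncount S ω i j : ℝ) < τ}.indicator fun _ => C i j ^ 2) μ :=
    (integrable_const _).indicator (hN i j)
  have hind_row (i : Fin n) : Integrable
      (fun ω => ∑ j, {ω | (Ncount S ω i j : ℝ) < τ}.indicator (fun _ => C i j ^ 2) ω) μ :=
    integrable_finsetSum _ fun j _ => hind i j
  have hind_sum := integrable_finsetSum Finset.univ fun i _ => hind_row i
  have herr_sum := (integrable_finsetSum Finset.univ fun ℓ _ => hint ℓ).const_mul τ⁻¹
  calc ∫ ω, deltaTilde (paceEst S Chatl τ ω) C ∂μ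
      ≤ ∫ ω, 1 / (n : ℝ) ^ 2 * (τ⁻¹ * ∑ ℓ, sqFrob (Chatl ℓ ω - restrictMat C (S ℓ ω))
        + ∑ i, ∑ j, {ω' | (Ncount S ω' i j : ℝ) < τ}.indicator (fun _ => C i j ^ 2) ω) ∂μ :=
        integral_mono_of_nonneg
          (.of_forall fun _ => mul_nonneg (by positivity) (sqFrob_nonneg _))
          ((herr_sum.add hind_sum).const_mul _)
          (.of_forall fun ω => deltaTilde_paceEst_le hτ C ω)
    _ = 1 / (n : ℝ) ^ 2 * (τ⁻¹ * ∑ ℓ, ∫ ω, sqFrob (Chatl ℓ ω - restrictMat C (S ℓ ω)) ∂μ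
        + ∑ i, ∑ j, C i j ^ 2 * μ.real {ω | (Ncount S ω i j : ℝ) < τ}) := by
        rw [integral_const_mul, integral_add herr_sum hind_sum, integral_const_mul,
          integral_finsetSum _ fun ℓ _ => hint ℓ, integral_finsetSum _ fun i _ => hind_row i]
        simp only [integral_finsetSum _ fun j _ => hind _ j, integral_indicator_const _ (hN _ _),
          smul_eq_mul, mul_comm (μ.real _)]

theorem pace_expected_bound_general {K : ℕ} (hn : 0 < n) {Z : Matrix (Fin n) (Fin K) ℝ}
    (hZ : IsClusterMembership Z) (hSmeas : ∀ ℓ A, MeasurableSet {ω | S ℓ ω = A})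
    (hint : ∀ ℓ, Integrable (fun ω => sqFrob (Chatl ℓ ω - restrictMat (Z * Zᵀ) (S ℓ ω))) μ)
    (hτ : 0 < τ) :
    ∫ ω, deltaTilde (paceEst S Chatl τ ω) (Z * Zᵀ) ∂μ
      ≤ 1 / (τ * (n : ℝ) ^ 2) *
          ∑ ℓ, ∫ ω, sqFrob (Chatl ℓ ω - restrictMat (Z * Zᵀ) (S ℓ ω)) ∂μ
        + ((Finset.univ.sup fun k => clusterSize Z k : ℕ) : ℝ) / n *
          (Finset.univ.sup' ⟨(⟨0, hn⟩, ⟨0, hn⟩), Finset.mem_univ _⟩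
            fun p : Fin n × Fin n => μ.real {ω | (Ncount S ω p.1 p.2 : ℝ) < τ}) := by
  set M : ℝ := ((Finset.univ.sup fun k => clusterSize Z k : ℕ) : ℝ)
  set p : Fin n × Fin n → ℝ := fun q => μ.real {ω | (Ncount S ω q.1 q.2 : ℝ) < τ}
  set P : ℝ := Finset.univ.sup' ⟨(⟨0, hn⟩, ⟨0, hn⟩), Finset.mem_univ _⟩ p
  set E : ℝ := ∑ ℓ, ∫ ω, sqFrob (Chatl ℓ ω - restrictMat (Z * Zᵀ) (S ℓ ω)) ∂μ
  have hp (i j : Fin n) : p (i, j) ≤ P := Finset.le_sup' p (Finset.mem_univ (i, j))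
  have hP : 0 ≤ P := measureReal_nonneg.trans (hp ⟨0, hn⟩ ⟨0, hn⟩)
  have hn' : (n : ℝ) ≠ 0 := by exact_mod_cast hn.ne'
  calc ∫ ω, deltaTilde (paceEst S Chatl τ ω) (Z * Zᵀ) ∂μ
      ≤ 1 / (n : ℝ) ^ 2 * (τ⁻¹ * E + ∑ i, ∑ j, (Z * Zᵀ) i j ^ 2 * p (i, j)) :=
        integral_deltaTilde_paceEst_le μ hSmeas hint hτ
    _ ≤ 1 / (n : ℝ) ^ 2 * (τ⁻¹ * E + sqFrob (Z * Zᵀ) * P) := by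
        gcongr
        exact sum_sq_mul_le_sqFrob_mul _ hp
    _ ≤ 1 / (n : ℝ) ^ 2 * (τ⁻¹ * E + n * M * P) := by
        gcongr
        exact hZ.sqFrob_mul_transpose_le
    _ = 1 / (τ * (n : ℝ) ^ 2) * E + M / n * P := by field_simp

end Pace

/-- main PACE bound, Theorem on the expected misclustering rate of PACE:
E[δ̃(Ĉ, C)] ≤ (T/(τn²)) E‖Ĉ^{(1)} − C^{(1)}‖_F² + π_max · max_{i,j} P(N_{ij} < τ). -/
theorem pace_expected_bound {n K T : ℕ} (hn : 0 < n) (hT : 0 < T)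
    {Ω : Type*} [MeasurableSpace Ω] (μ : Measure Ω) [IsProbabilityMeasure μ]
    (Z : Matrix (Fin n) (Fin K) ℝ) (hZ : IsClusterMembership Z)
    (S : Fin T → Ω → Finset (Fin n))
    (hSmeas : ∀ ℓ A, MeasurableSet {ω | S ℓ ω = A})
    (Chatl : Fin T → Ω → Matrix (Fin n) (Fin n) ℝ)
    (hCmeas : ∀ ℓ i j, Measurable fun ω => Chatl ℓ ω i j)
    (hC01 : ∀ ℓ ω i j, Chatl ℓ ω i j ∈ Set.Icc (0:ℝ) 1)
    (hCzero : ∀ ℓ ω i j, (i ∉ S ℓ ω ∨ j ∉ S ℓ ω) → Chatl ℓ ω i j = 0)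
    (τ : ℝ) (hτ1 : 1 ≤ τ) (hτT : τ ≤ T)
    (hIdent : ∀ ℓ : Fin T,
      IdentDistrib
        (fun ω => sqFrob (Chatl ℓ ω - restrictMat (Z * Zᵀ) (S ℓ ω)))
        (fun ω => sqFrob (Chatl ⟨0, hT⟩ ω - restrictMat (Z * Zᵀ) (S ⟨0, hT⟩ ω))) μ μ) :
    ∫ ω, deltaTilde (paceEst S Chatl τ ω) (Z * Zᵀ) ∂μ
      ≤ ((T : ℝ) / (τ * ((n : ℝ))^2)) *
          ∫ ω, sqFrob (Chatl ⟨0, hT⟩ ω - restrictMat (Z * Zᵀ) (S ⟨0, hT⟩ ω)) ∂μ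
        + (((Finset.univ.sup fun k => clusterSize Z k : ℕ) : ℝ) / (n : ℝ)) *
          (Finset.univ.sup' ⟨(⟨0, hn⟩, ⟨0, hn⟩), Finset.mem_univ _⟩
            fun p : Fin n × Fin n =>
              (μ {ω | ((Ncount S ω p.1 p.2 : ℝ) < τ)}).toReal) := by
  have hint (ℓ : Fin T) := integrable_sqFrob_sub_restrictMat
    (hIdent ℓ).aemeasurable_fst.aestronglyMeasurable (hC01 ℓ) hZ.mul_transpose_apply_mem_Icc
  refine (pace_expected_bound_general μ hn hZ hSmeas hint (one_pos.trans_le hτ1)).trans_eq ?_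
  simp only [(hIdent _).integral_eq, Finset.sum_const, Finset.card_fin, nsmul_eq_mul, ← mul_assoc,
    one_div_mul_eq_div]
  rfl
end

section
/- Fix n, K, T, m ∈ ℕ with m, n, T ≥ 1, fix 0 < θ < 1 and set τ = θTm/n. For ℓ = 1,…,T let y^{(ℓ)} ∈ {0,1}^n and let Ẑ^{(ℓ)} be real n×K matrices. Let Z̄ ∈ {0,1}^{n×K} be a cluster membership matrix. Set N_i = Σ_{ℓ=1}^T y^{(ℓ)}_i and define Ẑ^{GALE}_{ik} = 1_{\{N_i ≥ τ\}} · (Σ_{ℓ=1}^T y^{(ℓ)}_i Ẑ^{(ℓ)}_{ik}) / N_i. Then ‖Ẑ^{GALE} − Z̄‖_F² ≤ (n/(θT)) · Σ_{ℓ=1}^T (1/m) Σ_{i,k} y^{(ℓ)}_i (Ẑ^{(ℓ)}_{ik} − Z̄_{ik})² + Σ_{i=1}^n 1_{\{N_i < τ\}}. -/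
open Matrix BigOperators

/-!
If a node lies in at least `τ` subgraphs, its estimated row is a mean over those subgraphs; by
convexity of the squared distance to `Z̄`, its error is at most the mean of the subgraph errors,
hence at most `1 / τ` times their sum. Otherwise its estimated row is `0`, and the error is the
squared norm of a row of `Z̄`, which is `1`.
-/

section WeightedMean

variable {ι E : Type*} [SeminormedAddCommGroup E] [NormedSpace ℝ E]

theorem dist_centerMass_pow_le (s : Finset ι) {w : ι → ℝ} (hw : ∀ i ∈ s, 0 ≤ w i)
    (hpos : 0 < ∑ i ∈ s, w i) (x : ι → E) (z : E) (p : ℕ) :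
    dist (s.centerMass w x) z ^ p ≤ s.centerMass w fun i => dist (x i) z ^ p :=
  ((convexOn_univ_dist z).pow (fun _ _ => dist_nonneg) p).map_centerMass_le hw hpos
    fun _ _ => Set.mem_univ _

/-- The weighted mean of `x`, replaced by `0` when the total weight is below the threshold `τ`.
It models one entry of the GALE estimator: the index runs over the subgraphs, and `w` marks
those containing the node. -/
noncomputable def thresholdedMean [Fintype ι] (τ : ℝ) (w : ι → ℝ) (x : ι → E) : E :=
  if τ ≤ ∑ i, w i then Finset.univ.centerMass w x else 0

theorem thresholdedMean_eq_ite_mul_div [Fintype ι] (τ : ℝ) (w x : ι → ℝ) :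
    thresholdedMean τ w x =
      (if τ ≤ ∑ i, w i then 1 else 0) * (∑ i, w i * x i) / ∑ i, w i := by
  simp only [thresholdedMean, Finset.centerMass, smul_eq_mul, ite_mul, one_mul, zero_mul,
    ite_div, zero_div, inv_mul_eq_div]

theorem dist_thresholdedMean_pow_le [Fintype ι] {τ : ℝ} (hτ : 0 < τ) {w : ι → ℝ}
    (hw : ∀ i, 0 ≤ w i) (x : ι → E) (z : E) (p : ℕ) :
    dist (thresholdedMean τ w x) z ^ p ≤
      τ⁻¹ * ∑ i, w i * dist (x i) z ^ p + if ∑ i, w i < τ then ‖z‖ ^ p else 0 := by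
  have herr : 0 ≤ ∑ i, w i * dist (x i) z ^ p :=
    Finset.sum_nonneg fun i _ => mul_nonneg (hw i) (pow_nonneg dist_nonneg p)
  by_cases h : τ ≤ ∑ i, w i
  · rw [thresholdedMean, if_pos h, if_neg h.not_gt, add_zero]
    calc dist (Finset.univ.centerMass w x) z ^ p
        ≤ (∑ i, w i)⁻¹ * ∑ i, w i * dist (x i) z ^ p :=
          dist_centerMass_pow_le _ (fun i _ => hw i) (hτ.trans_le h) x z p
      _ ≤ τ⁻¹ * ∑ i, w i * dist (x i) z ^ p := by gcongr
  · rw [thresholdedMean, if_neg h, if_pos (not_le.mp h), dist_zero_left]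
    exact le_add_of_nonneg_left (mul_nonneg (inv_nonneg.mpr hτ.le) herr)

end WeightedMean

theorem IsClusterMembership.sum_sq_row {n K : ℕ} {Z : Matrix (Fin n) (Fin K) ℝ}
    (hZ : IsClusterMembership Z) (i : Fin n) : ∑ k, Z i k ^ 2 = 1 := by
  obtain ⟨k, hk, hunique⟩ := hZ.2 i
  have hzero : ∀ j ≠ k, Z i j = 0 := fun j hj =>
    (hZ.1 i j).resolve_right fun h => hj (hunique j h)
  rw [Fintype.sum_eq_single k fun j hj => by rw [hzero j hj, zero_pow two_ne_zero], hk, one_pow]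

theorem gale_deterministic_bound_general {ι κ Λ : Type*} [Fintype ι] [Fintype κ] [Fintype Λ]
    {τ : ℝ} (hτ : 0 < τ) {y : Λ → ι → ℝ} (hy : ∀ ℓ i, 0 ≤ y ℓ i)
    (Zhat : Λ → Matrix ι κ ℝ) (Zbar : Matrix ι κ ℝ) :
    ∑ i, ∑ k, (thresholdedMean τ (fun ℓ => y ℓ i) (fun ℓ => Zhat ℓ i k) - Zbar i k) ^ 2
      ≤ τ⁻¹ * ∑ ℓ, ∑ i, ∑ k, y ℓ i * (Zhat ℓ i k - Zbar i k) ^ 2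
        + ∑ i, if ∑ ℓ, y ℓ i < τ then ∑ k, Zbar i k ^ 2 else 0 := by
  have hentry (i : ι) (k : κ) :
      (thresholdedMean τ (fun ℓ => y ℓ i) (fun ℓ => Zhat ℓ i k) - Zbar i k) ^ 2
        ≤ τ⁻¹ * ∑ ℓ, y ℓ i * (Zhat ℓ i k - Zbar i k) ^ 2
          + if ∑ ℓ, y ℓ i < τ then Zbar i k ^ 2 else 0 := by
    simpa only [Real.dist_eq, Real.norm_eq_abs, sq_abs] using
      dist_thresholdedMean_pow_le hτ (fun ℓ => hy ℓ i) (fun ℓ => Zhat ℓ i k) (Zbar i k) 2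
  calc ∑ i, ∑ k, (thresholdedMean τ (fun ℓ => y ℓ i) (fun ℓ => Zhat ℓ i k) - Zbar i k) ^ 2
      ≤ ∑ i, ∑ k, (τ⁻¹ * ∑ ℓ, y ℓ i * (Zhat ℓ i k - Zbar i k) ^ 2
          + if ∑ ℓ, y ℓ i < τ then Zbar i k ^ 2 else 0) :=
        Finset.sum_le_sum fun i _ => Finset.sum_le_sum fun k _ => hentry i k
    _ = τ⁻¹ * ∑ i, ∑ k, ∑ ℓ, y ℓ i * (Zhat ℓ i k - Zbar i k) ^ 2
          + ∑ i, if ∑ ℓ, y ℓ i < τ then ∑ k, Zbar i k ^ 2 else 0 := by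
        simp only [Finset.sum_add_distrib, Finset.mul_sum, Finset.sum_ite_irrel,
          Finset.sum_const_zero]
    _ = τ⁻¹ * ∑ ℓ, ∑ i, ∑ k, y ℓ i * (Zhat ℓ i k - Zbar i k) ^ 2
          + ∑ i, if ∑ ℓ, y ℓ i < τ then ∑ k, Zbar i k ^ 2 else 0 := by
        rw [Finset.sum_comm_cycle]

/-- deterministic GALE aggregation bound: with τ = θTm/n,
N_i = Σ_ℓ y^{(ℓ)}_i and Ẑ^{GALE}_{ik} = 1_{N_i ≥ τ} (Σ_ℓ y^{(ℓ)}_i Ẑ^{(ℓ)}_{ik})/N_i, one has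
‖Ẑ^{GALE} − Z̄‖_F² ≤ (n/(θT)) Σ_ℓ (1/m) Σ_{i,k} y^{(ℓ)}_i (Ẑ^{(ℓ)}_{ik} − Z̄_{ik})²
                    + Σ_i 1_{N_i < τ}. -/
theorem gale_deterministic_bound {n K T m : ℕ}
    (hn : 1 ≤ n) (hT : 1 ≤ T) (hm : 1 ≤ m)
    (θ : ℝ) (hθ0 : 0 < θ) (hθ1 : θ < 1)
    (y : Fin T → Fin n → ℝ)
    (hy : ∀ ℓ i, y ℓ i = 0 ∨ y ℓ i = 1)
    (Zhat : Fin T → Matrix (Fin n) (Fin K) ℝ)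
    (Zbar : Matrix (Fin n) (Fin K) ℝ) (hZbar : IsClusterMembership Zbar)
    (N : Fin n → ℝ) (hN : ∀ i, N i = ∑ ℓ, y ℓ i)
    (Zgale : Matrix (Fin n) (Fin K) ℝ)
    (hZgale : ∀ i k, Zgale i k =
      (if θ * T * m / n ≤ N i then 1 else 0) * (∑ ℓ, y ℓ i * Zhat ℓ i k) / N i) :
    ∑ i, ∑ k, (Zgale i k - Zbar i k)^2
      ≤ ((n : ℝ) / (θ * T)) *
          ∑ ℓ, (1 / (m : ℝ)) * ∑ i, ∑ k, y ℓ i * (Zhat ℓ i k - Zbar i k)^2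
        + ∑ i, (if N i < θ * T * m / n then (1:ℝ) else 0) := by
  have hτ : 0 < θ * T * m / n := by positivity
  have hy_nonneg (ℓ : Fin T) (i : Fin n) : 0 ≤ y ℓ i := by
    rcases hy ℓ i with h | h <;> simp only [h, le_refl, zero_le_one]
  have hscale (S : ℝ) : n / (θ * T) * (1 / m * S) = (θ * T * m / n)⁻¹ * S := by field_simp
  simpa only [hZgale, hN, thresholdedMean_eq_ite_mul_div, hZbar.sum_sq_row, ← Finset.mul_sum,
    hscale] using gale_deterministic_bound_general hτ hy_nonneg Zhat Zbar
end
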